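/- Suppose dim V = 2n+1 with n ≥ 1 and the contact metric algebraic relations h∘φ = −φ∘h and tr(h) = 0 hold. Let Q : V → V be the Ricci operator defined by ⟨QX, Y⟩ = Σₐ R(eₐ, X, Y, eₐ) for any orthonormal basis (eₐ) of V. Then Q∘φ − φ∘Q = 2((2n−1)f₄ − f₆)·(h∘φ). In particular Q∘φ = φ∘Q if and only if (2n−1)f₄ − f₆ = 0 or h∘φ = 0. -/

import Mathlib

open RealInnerProductSpace

variable {V : Type*} [NormedAddCommGroup V] [InnerProductSpace ℝ V]

/-- R₁(X,Y)Z = ⟨Y,Z⟩X − ⟨X,Z⟩Y -/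
noncomputable def R1 (X Y Z : V) : V := ⟪Y, Z⟫ • X - ⟪X, Z⟫ • Y

/-- R₂(X,Y)Z = ⟨X,φZ⟩φY − ⟨Y,φZ⟩φX + 2⟨X,φY⟩φZ -/
noncomputable def R2 (φ : V →ₗ[ℝ] V) (X Y Z : V) : V :=
  ⟪X, φ Z⟫ • φ Y - ⟪Y, φ Z⟫ • φ X + (2 * ⟪X, φ Y⟫) • φ Z

/-- R₃(X,Y)Z = η(X)η(Z)Y − η(Y)η(Z)X + ⟨X,Z⟩η(Y)ξ − ⟨Y,Z⟩η(X)ξ, where η(X) = ⟨X,ξ⟩ -/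
noncomputable def R3 (ξ : V) (X Y Z : V) : V :=
  (⟪X, ξ⟫ * ⟪Z, ξ⟫) • Y - (⟪Y, ξ⟫ * ⟪Z, ξ⟫) • X
    + (⟪X, Z⟫ * ⟪Y, ξ⟫) • ξ - (⟪Y, Z⟫ * ⟪X, ξ⟫) • ξ

/-- R₄(X,Y)Z = ⟨Y,Z⟩hX − ⟨X,Z⟩hY + ⟨hY,Z⟩X − ⟨hX,Z⟩Y -/
noncomputable def R4 (h : V →ₗ[ℝ] V) (X Y Z : V) : V :=
  ⟪Y, Z⟫ • h X - ⟪X, Z⟫ • h Y + ⟪h Y, Z⟫ • X - ⟪h X, Z⟫ • Y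

/-- R₅(X,Y)Z = ⟨hY,Z⟩hX − ⟨hX,Z⟩hY + ⟨φhX,Z⟩φhY − ⟨φhY,Z⟩φhX -/
noncomputable def R5 (φ h : V →ₗ[ℝ] V) (X Y Z : V) : V :=
  ⟪h Y, Z⟫ • h X - ⟪h X, Z⟫ • h Y
    + ⟪φ (h X), Z⟫ • φ (h Y) - ⟪φ (h Y), Z⟫ • φ (h X)

/-- R₆(X,Y)Z = η(X)η(Z)hY − η(Y)η(Z)hX + ⟨hX,Z⟩η(Y)ξ − ⟨hY,Z⟩η(X)ξ -/
noncomputable def R6 (ξ : V) (h : V →ₗ[ℝ] V) (X Y Z : V) : V :=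
  (⟪X, ξ⟫ * ⟪Z, ξ⟫) • h Y - (⟪Y, ξ⟫ * ⟪Z, ξ⟫) • h X
    + (⟪h X, Z⟫ * ⟪Y, ξ⟫) • ξ - (⟪h Y, Z⟫ * ⟪X, ξ⟫) • ξ

/-- R = f₁R₁ + f₂R₂ + f₃R₃ + f₄R₄ + f₅R₅ + f₆R₆ -/
noncomputable def Rc (φ h : V →ₗ[ℝ] V) (ξ : V) (f₁ f₂ f₃ f₄ f₅ f₆ : ℝ) (X Y Z : V) : V :=
  f₁ • R1 X Y Z + f₂ • R2 φ X Y Z + f₃ • R3 ξ X Y Z + f₄ • R4 h X Y Z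
    + f₅ • R5 φ h X Y Z + f₆ • R6 ξ h X Y Z

/-- R(X,Y,Z,W) = ⟨R(X,Y)Z, W⟩ -/
noncomputable def Rq (φ h : V →ₗ[ℝ] V) (ξ : V) (f₁ f₂ f₃ f₄ f₅ f₆ : ℝ) (X Y Z W : V) : ℝ :=
  ⟪Rc φ h ξ f₁ f₂ f₃ f₄ f₅ f₆ X Y Z, W⟫

/-
Contracting each `Rᵢ` over an orthonormal basis gives its Ricci form for arbitrary `φ`, `h`, `ξ`.
On an almost contact metric structure, anticommutation `hφ = -φh` forces `hξ = (tr h) ξ`,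
`η ∘ h = (tr h) η` and `tr (φh) = 0`, and it makes the quadratic terms of `R₅` cancel up to a
multiple of `η ⊗ ξ`. Hence `Q = A • id + B • η ⊗ ξ + C • h` with
`C = (dim V - 2) f₄ + (tr h) f₅ - f₆`. The first two terms commute with `φ`, so
`Qφ - φQ = C (hφ - φh) = 2C hφ`.
-/

open Module (End finrank)
open InnerProductSpace (rankOne trace_rankOne)
open LinearMap (trace)

local notation:75 x:76 "⊗♭" y:76 => ContinuousLinearMap.toLinearMap (rankOne ℝ x y)

theorem trace_mul_eq_zero_of_anticommute {R M : Type*} [CommRing R] [IsAddTorsionFree R]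
    [AddCommGroup M] [Module R M] {f g : End R M} (hfg : ∀ x, g (f x) = -f (g x)) :
    trace R M (f * g) = 0 := by
  have hmul : g * f = -(f * g) := LinearMap.ext hfg
  rw [← self_eq_neg, ← map_neg, ← hmul, LinearMap.trace_mul_comm]

section Trace

variable [FiniteDimensional ℝ V]

theorem trace_rankOne_comp (x y : V) (A : V →ₗ[ℝ] V) :
    trace ℝ V ((x ⊗♭ y) ∘ₗ A) = ⟪A x, y⟫ := by
  have hA : A ∘ₗ (x ⊗♭ y) = A x ⊗♭ y := by
    ext Z
    simp
  rw [LinearMap.trace_comp_comm', hA, trace_rankOne, real_inner_comm]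

theorem trace_eq_zero_of_skew {A : V →ₗ[ℝ] V} (hA : ∀ X Y, ⟪A X, Y⟫ = -⟪X, A Y⟫) :
    trace ℝ V A = 0 := by
  rw [A.trace_eq_sum_inner (stdOrthonormalBasis ℝ V)]
  refine Finset.sum_eq_zero fun a _ => ?_
  rw [← self_eq_neg, ← hA, real_inner_comm]

end Trace

section RicciForm

variable {ι : Type*} [Fintype ι]

/-- The Ricci form `(X, Y) ↦ tr (Z ↦ T(Z, X)Y)` of a curvature-like tensor `T`, as a contraction
over an orthonormal basis. The tensor is a bare function, so its linearity is not recorded. -/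
noncomputable def ricciForm (b : OrthonormalBasis ι ℝ V) (T : V → V → V → V) (X Y : V) : ℝ :=
  ∑ a, ⟪T (b a) X Y, b a⟫

variable (b : OrthonormalBasis ι ℝ V)

theorem ricciForm_eq_trace {T : V → V → V → V} {X Y : V} (L : V →ₗ[ℝ] V)
    (hL : ∀ Z, T Z X Y = L Z) : ricciForm b T X Y = trace ℝ V L := by
  simp only [ricciForm, hL, L.trace_eq_sum_inner b, real_inner_comm]

theorem ricciForm_Rc (φ h : V →ₗ[ℝ] V) (ξ : V) (f₁ f₂ f₃ f₄ f₅ f₆ : ℝ) (X Y : V) :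
    ricciForm b (Rc φ h ξ f₁ f₂ f₃ f₄ f₅ f₆) X Y =
      f₁ * ricciForm b R1 X Y + f₂ * ricciForm b (R2 φ) X Y + f₃ * ricciForm b (R3 ξ) X Y
        + f₄ * ricciForm b (R4 h) X Y + f₅ * ricciForm b (R5 φ h) X Y
        + f₆ * ricciForm b (R6 ξ h) X Y := by
  simp only [ricciForm, Rc, inner_add_left, real_inner_smul_left, Finset.sum_add_distrib,
    Finset.mul_sum]

variable [FiniteDimensional ℝ V]

theorem ricciForm_R1 (X Y : V) : ricciForm b R1 X Y = (finrank ℝ V - 1) * ⟪X, Y⟫ := by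
  calc ricciForm b R1 X Y
    _ = trace ℝ V (⟪X, Y⟫ • LinearMap.id - X ⊗♭ Y) :=
        ricciForm_eq_trace b _ fun Z => by simp [R1, real_inner_comm]
    _ = _ := by
      simp only [map_sub, map_smul, LinearMap.trace_id, trace_rankOne, smul_eq_mul, real_inner_comm]
      ring

theorem ricciForm_R2 (φ : V →ₗ[ℝ] V) (X Y : V) :
    ricciForm b (R2 φ) X Y = 3 * ⟪φ X, φ Y⟫ - trace ℝ V φ * ⟪X, φ Y⟫ := by
  calc ricciForm b (R2 φ) X Y
    _ = trace ℝ V (φ X ⊗♭ φ Y - ⟪X, φ Y⟫ • φ + (2 : ℝ) • φ Y ⊗♭ φ X) :=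
        ricciForm_eq_trace b _ fun Z => by simp [R2, real_inner_comm, smul_smul]
    _ = _ := by
      simp only [map_add, map_sub, map_smul, trace_rankOne, smul_eq_mul, real_inner_comm (φ X)]
      ring

theorem ricciForm_R3 (ξ X Y : V) :
    ricciForm b (R3 ξ) X Y = (2 - finrank ℝ V) * (⟪X, ξ⟫ * ⟪Y, ξ⟫) - ‖ξ‖ ^ 2 * ⟪X, Y⟫ := by
  calc ricciForm b (R3 ξ) X Y
    _ = trace ℝ V (⟪Y, ξ⟫ • X ⊗♭ ξ - (⟪X, ξ⟫ * ⟪Y, ξ⟫) • LinearMap.id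
          + ⟪X, ξ⟫ • ξ ⊗♭ Y - ⟪X, Y⟫ • ξ ⊗♭ ξ) :=
        ricciForm_eq_trace b _ fun Z => by simp [R3, real_inner_comm, smul_smul, mul_comm]
    _ = _ := by
      simp only [map_add, map_sub, map_smul, LinearMap.trace_id, trace_rankOne, smul_eq_mul,
        real_inner_comm X ξ, real_inner_self_eq_norm_sq]
      ring

theorem ricciForm_R4 (h : V →ₗ[ℝ] V) (X Y : V) :
    ricciForm b (R4 h) X Y = trace ℝ V h * ⟪X, Y⟫ + (finrank ℝ V - 2) * ⟪h X, Y⟫ := by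
  calc ricciForm b (R4 h) X Y
    _ = trace ℝ V (⟪X, Y⟫ • h - h X ⊗♭ Y + ⟪h X, Y⟫ • LinearMap.id - (X ⊗♭ Y) ∘ₗ h) :=
        ricciForm_eq_trace b _ fun Z => by simp [R4, real_inner_comm]
    _ = _ := by
      simp only [map_add, map_sub, map_smul, LinearMap.trace_id, trace_rankOne,
        trace_rankOne_comp, smul_eq_mul, real_inner_comm (h X)]
      ring

theorem ricciForm_R5 (φ h : V →ₗ[ℝ] V) (X Y : V) :
    ricciForm b (R5 φ h) X Y =
      trace ℝ V h * ⟪h X, Y⟫ - ⟪h (h X), Y⟫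
        + ⟪φ (h (φ (h X))), Y⟫ - trace ℝ V (φ ∘ₗ h) * ⟪φ (h X), Y⟫ := by
  calc ricciForm b (R5 φ h) X Y
    _ = trace ℝ V (⟪h X, Y⟫ • h - (h X ⊗♭ Y) ∘ₗ h
          + (φ (h X) ⊗♭ Y) ∘ₗ (φ ∘ₗ h) - ⟪φ (h X), Y⟫ • (φ ∘ₗ h)) :=
        ricciForm_eq_trace b _ fun Z => by simp [R5, real_inner_comm]
    _ = _ := by
      simp only [map_add, map_sub, map_smul, trace_rankOne_comp, smul_eq_mul, LinearMap.comp_apply]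
      ring

theorem ricciForm_R6 (ξ : V) (h : V →ₗ[ℝ] V) (X Y : V) :
    ricciForm b (R6 ξ h) X Y =
      ⟪h X, ξ⟫ * ⟪Y, ξ⟫ + ⟪X, ξ⟫ * ⟪h ξ, Y⟫
        - trace ℝ V h * (⟪X, ξ⟫ * ⟪Y, ξ⟫) - ‖ξ‖ ^ 2 * ⟪h X, Y⟫ := by
  calc ricciForm b (R6 ξ h) X Y
    _ = trace ℝ V (⟪Y, ξ⟫ • h X ⊗♭ ξ - (⟪X, ξ⟫ * ⟪Y, ξ⟫) • h
          + ⟪X, ξ⟫ • ((ξ ⊗♭ Y) ∘ₗ h) - ⟪h X, Y⟫ • ξ ⊗♭ ξ) :=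
        ricciForm_eq_trace b _ fun Z => by simp [R6, real_inner_comm, smul_smul, mul_comm]
    _ = _ := by
      simp only [map_add, map_sub, map_smul, trace_rankOne, trace_rankOne_comp, smul_eq_mul,
        real_inner_comm (h X) ξ, real_inner_self_eq_norm_sq]
      ring

end RicciForm

/-- An almost contact metric structure on `V`: an endomorphism `φ` and a unit vector `ξ` (the Reeb
vector), whose dual form `η` is encoded as `⟪·, ξ⟫`, with `φ² = -id + η ⊗ ξ` and `φ` isometric up
to `η ⊗ η`. -/
structure IsAlmostContactMetric (φ : V →ₗ[ℝ] V) (ξ : V) : Prop where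
  norm_eq_one : ‖ξ‖ = 1
  map_map : ∀ X, φ (φ X) = -X + ⟪X, ξ⟫ • ξ
  inner_map_map : ∀ X Y, ⟪φ X, φ Y⟫ = ⟪X, Y⟫ - ⟪X, ξ⟫ * ⟪Y, ξ⟫

namespace IsAlmostContactMetric

variable {φ h : V →ₗ[ℝ] V} {ξ : V}

theorem inner_self_eq_one (hφ : IsAlmostContactMetric φ ξ) : ⟪ξ, ξ⟫ = 1 := by
  rw [real_inner_self_eq_norm_sq, hφ.norm_eq_one, one_pow]

theorem reeb_ne_zero (hφ : IsAlmostContactMetric φ ξ) : ξ ≠ 0 :=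
  norm_ne_zero_iff.mp (hφ.norm_eq_one.trans_ne one_ne_zero)

theorem map_reeb (hφ : IsAlmostContactMetric φ ξ) : φ ξ = 0 := by
  rw [← inner_self_eq_zero (𝕜 := ℝ), hφ.inner_map_map, hφ.inner_self_eq_one]
  norm_num

theorem inner_map_reeb (hφ : IsAlmostContactMetric φ ξ) (X : V) : ⟪φ X, ξ⟫ = 0 := by
  have hcube : φ (φ (φ X)) = -φ X := by simp [hφ.map_map X, hφ.map_reeb]
  have hsmul : ⟪φ X, ξ⟫ • ξ = 0 := by simpa [hφ.map_map (φ X)] using hcube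
  exact (smul_eq_zero.mp hsmul).resolve_right hφ.reeb_ne_zero

theorem inner_map_left (hφ : IsAlmostContactMetric φ ξ) (X Y : V) : ⟪φ X, Y⟫ = -⟪X, φ Y⟫ := by
  have hXφY := hφ.inner_map_map X (φ Y)
  simp only [hφ.map_map, inner_add_right, inner_neg_right, real_inner_smul_right,
    hφ.inner_map_reeb] at hXφY
  linarith

section Anticommute

variable [FiniteDimensional ℝ V]

-- Both `h` and `φh` anticommute with `φ`, so `tr (φφh) = 0`, where `φφh = -h + ξ ⊗ (η ∘ h)`.
theorem trace_eq_inner_of_anticommute (hφ : IsAlmostContactMetric φ ξ)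
    (hanti : ∀ X, h (φ X) = -φ (h X)) : trace ℝ V h = ⟪h ξ, ξ⟫ := by
  have htrace : trace ℝ V (φ * (φ * h)) = 0 :=
    trace_mul_eq_zero_of_anticommute fun X => by simp [hanti]
  have hdecomp : φ * (φ * h) = -h + (ξ ⊗♭ ξ) ∘ₗ h := by
    ext X
    simp [hφ.map_map, real_inner_comm]
  rw [hdecomp, map_add, map_neg, trace_rankOne_comp] at htrace
  exact neg_add_eq_zero.mp htrace

theorem apply_reeb_of_anticommute (hφ : IsAlmostContactMetric φ ξ)
    (hanti : ∀ X, h (φ X) = -φ (h X)) : h ξ = trace ℝ V h • ξ := by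
  have hker : φ (h ξ) = 0 := by simpa [hφ.map_reeb] using (hanti ξ).symm
  have hsq := hφ.map_map (h ξ)
  rw [hker, map_zero, ← hφ.trace_eq_inner_of_anticommute hanti] at hsq
  exact neg_add_eq_zero.mp hsq.symm

theorem inner_apply_reeb_of_anticommute (hφ : IsAlmostContactMetric φ ξ)
    (hanti : ∀ X, h (φ X) = -φ (h X)) (X : V) :
    ⟪h X, ξ⟫ = trace ℝ V h * ⟪X, ξ⟫ := by
  have hcomm : h (φ (φ X)) = φ (φ (h X)) := by simp [hanti]
  have hsmul : ⟪X, ξ⟫ • h ξ = ⟪h X, ξ⟫ • ξ := by simpa [hφ.map_map] using hcomm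
  rw [hφ.apply_reeb_of_anticommute hanti, smul_smul] at hsmul
  rw [← smul_left_injective ℝ hφ.reeb_ne_zero hsmul, mul_comm]

theorem comp_sq_apply_of_anticommute (hφ : IsAlmostContactMetric φ ξ)
    (hanti : ∀ X, h (φ X) = -φ (h X)) (X : V) :
    φ (h (φ (h X))) = h (h X) - (trace ℝ V h ^ 2 * ⟪X, ξ⟫) • ξ := by
  rw [hanti, map_neg, hφ.map_map]
  simp only [hφ.inner_apply_reeb_of_anticommute hanti]
  module

variable {ι : Type*} [Fintype ι] (b : OrthonormalBasis ι ℝ V)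

theorem ricciForm_Rc_of_anticommute (hφ : IsAlmostContactMetric φ ξ)
    (hanti : ∀ X, h (φ X) = -φ (h X)) (f₁ f₂ f₃ f₄ f₅ f₆ : ℝ) (X Y : V) :
    ricciForm b (Rc φ h ξ f₁ f₂ f₃ f₄ f₅ f₆) X Y =
      ((finrank ℝ V - 1) * f₁ + 3 * f₂ - f₃ + trace ℝ V h * f₄) * ⟪X, Y⟫
        + (trace ℝ V h * f₆ - 3 * f₂ - (finrank ℝ V - 2) * f₃
            - trace ℝ V h ^ 2 * f₅) * (⟪X, ξ⟫ * ⟪Y, ξ⟫)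
        + ((finrank ℝ V - 2) * f₄ + trace ℝ V h * f₅ - f₆) * ⟪h X, Y⟫ := by
  have htrφh : trace ℝ V (φ ∘ₗ h) = 0 := trace_mul_eq_zero_of_anticommute hanti
  rw [ricciForm_Rc, ricciForm_R1, ricciForm_R2, ricciForm_R3, ricciForm_R4, ricciForm_R5,
    ricciForm_R6, htrφh, trace_eq_zero_of_skew hφ.inner_map_left, hφ.inner_map_map, hφ.norm_eq_one,
    hφ.comp_sq_apply_of_anticommute hanti, hφ.inner_apply_reeb_of_anticommute hanti,
    hφ.apply_reeb_of_anticommute hanti, inner_sub_left, real_inner_smul_left,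
    real_inner_smul_left, real_inner_comm Y ξ]
  ring

theorem ricciOperator_commutator (hφ : IsAlmostContactMetric φ ξ)
    (hanti : ∀ X, h (φ X) = -φ (h X)) {f₁ f₂ f₃ f₄ f₅ f₆ : ℝ} {Q : V →ₗ[ℝ] V}
    (hQ : ∀ X Y, ⟪Q X, Y⟫ = ricciForm b (Rc φ h ξ f₁ f₂ f₃ f₄ f₅ f₆) X Y) (X : V) :
    Q (φ X) - φ (Q X) =
      (2 * ((finrank ℝ V - 2) * f₄ + trace ℝ V h * f₅ - f₆)) • h (φ X) := by
  refine ext_inner_right ℝ fun Y => ?_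
  simp only [inner_sub_left, real_inner_smul_left, hφ.inner_map_left (Q X), hQ,
    hφ.ricciForm_Rc_of_anticommute b hanti, hφ.inner_map_reeb, hφ.inner_map_left X Y, hanti,
    inner_neg_left, hφ.inner_map_left (h X) Y]
  ring

end Anticommute

end IsAlmostContactMetric

theorem stmt16_general [FiniteDimensional ℝ V] {φ h : V →ₗ[ℝ] V} {ξ : V}
    (hφ : IsAlmostContactMetric φ ξ) (hanti : ∀ X, h (φ X) = -φ (h X))
    {ι : Type*} [Fintype ι] (b : OrthonormalBasis ι ℝ V) {f₁ f₂ f₃ f₄ f₅ f₆ : ℝ}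
    {Q : V →ₗ[ℝ] V} (hQ : ∀ X Y, ⟪Q X, Y⟫ = ricciForm b (Rc φ h ξ f₁ f₂ f₃ f₄ f₅ f₆) X Y) :
    (∀ X, Q (φ X) - φ (Q X) =
        (2 * ((finrank ℝ V - 2) * f₄ + trace ℝ V h * f₅ - f₆)) • h (φ X)) ∧
      ((∀ X, Q (φ X) = φ (Q X)) ↔
        ((finrank ℝ V - 2) * f₄ + trace ℝ V h * f₅ - f₆ = 0 ∨ ∀ X, h (φ X) = 0)) := by
  have hcomm := hφ.ricciOperator_commutator b hanti hQ
  refine ⟨hcomm, ?_⟩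
  simp only [← sub_eq_zero (a := Q _), hcomm, smul_eq_zero, mul_eq_zero, two_ne_zero, false_or,
    forall_or_left]

theorem stmt16 {V : Type*} [NormedAddCommGroup V] [InnerProductSpace ℝ V]
    [FiniteDimensional ℝ V]
    (φ h : V →ₗ[ℝ] V) (ξ : V) (f₁ f₂ f₃ f₄ f₅ f₆ : ℝ)
    (hξ : ‖ξ‖ = 1)
    (hφ2 : ∀ X : V, φ (φ X) = -X + ⟪X, ξ⟫ • ξ)
    (hmet : ∀ X Y : V, ⟪φ X, φ Y⟫ = ⟪X, Y⟫ - ⟪X, ξ⟫ * ⟪Y, ξ⟫)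
    (hsym : ∀ X Y : V, ⟪h X, Y⟫ = ⟪X, h Y⟫)
    (hhξ : h ξ = 0)
    (n : ℕ) (hn : 1 ≤ n) (hdim : Module.finrank ℝ V = 2 * n + 1)
    (hanti : ∀ X : V, h (φ X) = -φ (h X))
    (htr : LinearMap.trace ℝ V h = 0)
    (Q : V →ₗ[ℝ] V)
    (hQ : ∀ (b : OrthonormalBasis (Fin (2 * n + 1)) ℝ V) (X Y : V),
      ⟪Q X, Y⟫ = ∑ a : Fin (2 * n + 1), Rq φ h ξ f₁ f₂ f₃ f₄ f₅ f₆ (b a) X Y (b a)) :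
    (∀ X : V, Q (φ X) - φ (Q X) = (2 * ((2 * (n : ℝ) - 1) * f₄ - f₆)) • h (φ X)) ∧
      ((∀ X : V, Q (φ X) = φ (Q X)) ↔
        ((2 * (n : ℝ) - 1) * f₄ - f₆ = 0 ∨ ∀ X : V, h (φ X) = 0)) := by
  have hcoeff : ((2 * n + 1 : ℕ) : ℝ) - 2 = 2 * n - 1 := by push_cast; ring
  simpa only [hdim, htr, hcoeff, zero_mul, add_zero] using stmt16_general ⟨hξ, hφ2, hmet⟩ hanti
    ((stdOrthonormalBasis ℝ V).reindex (finCongr hdim)) (hQ _)
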